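/- Let X be a real normed vector space with von Neumann–Jordan constant at most ε + 1, and let x, y ∈ X be unit vectors with [x, y] = 0. Then for every t ∈ ℝ, |‖x + t·y‖²/(1 + t²) − 1| ≤ 15ε + 13.5ε². -/

import Mathlib

/-!
Write `[a, b] = ‖a + b‖² - ‖a - b‖²`. Since `2‖x + t y‖²` is the sum of `‖x + t y‖² + ‖x - t y‖²`,
which the approximate parallelogram law controls, and of `[x, t y]`, it suffices to show that
`φ t = [x, t y]` is small. Applying the approximate parallelogram law at `x + s y` and at `x - s y`
shows that `φ` is affine at midpoints up to an error of order `ε`. As `φ` vanishes at `±1`,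
reflecting a point of `[-1, 1]` where `|φ|` is maximal in the nearer endpoint bounds `|φ|` on
`[-1, 1]` by this error, and `[x, t y] = t² [y, t⁻¹ x]` reduces the case `|t| > 1` to `|t| ≤ 1`.
-/

open Set

section ApproximatelyAffine

variable {E : Type*} [SeminormedAddCommGroup E] [NormedSpace ℝ E]

theorem exists_endpoint_half_add_eq {a b s : ℝ} (hs : s ∈ Icc a b) :
    ∃ e, (e = a ∨ e = b) ∧ ∃ q ∈ Icc a b, (e + q) / 2 = s := by
  obtain ⟨has, hsb⟩ := hs
  rcases le_total s ((a + b) / 2) with h | h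
  · exact ⟨a, .inl rfl, 2 * s - a, ⟨by linarith, by linarith⟩, by ring⟩
  · exact ⟨b, .inr rfl, 2 * s - b, ⟨by linarith, by linarith⟩, by ring⟩

theorem norm_le_of_norm_add_sub_two_smul_half_add_le {f : ℝ → E} {a b δ : ℝ}
    (hf : ContinuousOn f (Icc a b)) (ha : f a = 0) (hb : f b = 0)
    (hmid : ∀ p ∈ Icc a b, ∀ q ∈ Icc a b, ‖f p + f q - (2 : ℝ) • f ((p + q) / 2)‖ ≤ δ)
    {t : ℝ} (ht : t ∈ Icc a b) : ‖f t‖ ≤ δ := by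
  obtain ⟨s, hs, hmax⟩ := isCompact_Icc.exists_isMaxOn ⟨t, ht⟩ hf.norm
  obtain ⟨e, he, q, hq, rfl⟩ := exists_endpoint_half_add_eq hs
  have hab : a ≤ b := ht.1.trans ht.2
  have heI : e ∈ Icc a b := by
    rcases he with rfl | rfl
    exacts [left_mem_Icc.2 hab, right_mem_Icc.2 hab]
  have hfe : f e = 0 := by
    rcases he with rfl | rfl
    exacts [ha, hb]
  have hdouble : 2 * ‖f ((e + q) / 2)‖ ≤ ‖f ((e + q) / 2)‖ + δ :=
    calc 2 * ‖f ((e + q) / 2)‖ = ‖(2 : ℝ) • f ((e + q) / 2)‖ := by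
          rw [norm_smul, Real.norm_ofNat]
      _ ≤ ‖f q‖ + ‖f q - (2 : ℝ) • f ((e + q) / 2)‖ := norm_le_norm_add_norm_sub _ _
      _ ≤ ‖f ((e + q) / 2)‖ + δ := by
          refine add_le_add (hmax hq) ?_
          simpa only [hfe, zero_add] using hmid e heI q hq
  have htmax : ‖f t‖ ≤ ‖f ((e + q) / 2)‖ := hmax ht
  linarith

end ApproximatelyAffine

/-- The von Neumann–Jordan constant of `X` is at most `C`. The bound is one-sided:
substituting `a + b` and `a - b` for `a` and `b` turns it into the lower bound. The denominator is
cleared, so that `a = b = 0` is no exception. -/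
def VonNeumannJordanConstLE (X : Type*) [SeminormedAddCommGroup X] (C : ℝ) : Prop :=
  ∀ a b : X, ‖a + b‖ ^ 2 + ‖a - b‖ ^ 2 ≤ 2 * C * (‖a‖ ^ 2 + ‖b‖ ^ 2)

/-- The bracket `[a, b]`, which is `4 ⟪a, b⟫` in an inner product space. -/
def normBracket {X : Type*} [SeminormedAddCommGroup X] (a b : X) : ℝ :=
  ‖a + b‖ ^ 2 - ‖a - b‖ ^ 2

section Bracket

variable {X : Type*} [SeminormedAddCommGroup X]

theorem normBracket_comm (a b : X) : normBracket a b = normBracket b a := by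
  rw [normBracket, normBracket, add_comm, norm_sub_rev]

theorem normBracket_neg_right (a b : X) : normBracket a (-b) = -normBracket a b := by
  rw [normBracket, normBracket, sub_neg_eq_add, ← sub_eq_add_neg, neg_sub]

variable [NormedSpace ℝ X]

theorem norm_smul_sq (c : ℝ) (a : X) : ‖c • a‖ ^ 2 = c ^ 2 * ‖a‖ ^ 2 := by
  rw [norm_smul, mul_pow, Real.norm_eq_abs, sq_abs]

theorem normBracket_smul_smul (c : ℝ) (a b : X) :
    normBracket (c • a) (c • b) = c ^ 2 * normBracket a b := by
  rw [normBracket, normBracket, ← smul_add, ← smul_sub, norm_smul_sq, norm_smul_sq, mul_sub]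

end Bracket

namespace VonNeumannJordanConstLE

variable {X : Type*} [SeminormedAddCommGroup X] {ε : ℝ}

theorem of_div_le {C : ℝ}
    (h : ∀ a b : X, ¬(a = 0 ∧ b = 0) →
      (‖a + b‖ ^ 2 + ‖a - b‖ ^ 2) / (2 * (‖a‖ ^ 2 + ‖b‖ ^ 2)) ≤ C) :
    VonNeumannJordanConstLE X C := by
  intro a b
  have hnonneg : 0 ≤ ‖a‖ ^ 2 + ‖b‖ ^ 2 := by positivity
  rcases hnonneg.eq_or_lt with hzero | hpos
  · have ha : ‖a‖ = 0 := by nlinarith [sq_nonneg ‖b‖]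
    have hb : ‖b‖ = 0 := by nlinarith [sq_nonneg ‖a‖]
    have hadd : ‖a + b‖ = 0 := le_antisymm (by linarith [norm_add_le a b]) (norm_nonneg _)
    have hsub : ‖a - b‖ = 0 := le_antisymm (by linarith [norm_sub_le a b]) (norm_nonneg _)
    simp [ha, hb, hadd, hsub]
  · have hne : ¬(a = 0 ∧ b = 0) := by
      rintro ⟨rfl, rfl⟩
      simp at hpos
    have hle := (div_le_iff₀ (by positivity)).1 (h a b hne)
    linarith

variable [NormedSpace ℝ X]

theorem two_mul_le_mul {C : ℝ} (h : VonNeumannJordanConstLE X C) (a b : X) :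
    2 * (‖a‖ ^ 2 + ‖b‖ ^ 2) ≤ C * (‖a + b‖ ^ 2 + ‖a - b‖ ^ 2) := by
  have hsum : a + b + (a - b) = (2 : ℝ) • a := by module
  have hdiff : a + b - (a - b) = (2 : ℝ) • b := by module
  have hle := h (a + b) (a - b)
  rw [hsum, hdiff, norm_smul_sq, norm_smul_sq] at hle
  linarith

theorem abs_parallelogram_le (h : VonNeumannJordanConstLE X (ε + 1)) (hε : 0 ≤ ε) (a b : X) :
    |‖a + b‖ ^ 2 + ‖a - b‖ ^ 2 - 2 * (‖a‖ ^ 2 + ‖b‖ ^ 2)| ≤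
      2 * ε * (‖a‖ ^ 2 + ‖b‖ ^ 2) := by
  have hupper := h a b
  have hlower : 2 * (1 - ε) * (‖a‖ ^ 2 + ‖b‖ ^ 2) ≤ ‖a + b‖ ^ 2 + ‖a - b‖ ^ 2 := by
    refine le_of_mul_le_mul_left ?_ (by positivity : 0 < ε + 1)
    have hsq : 0 ≤ ε ^ 2 * (‖a‖ ^ 2 + ‖b‖ ^ 2) := by positivity
    linarith [h.two_mul_le_mul a b]
  rw [abs_le]
  constructor <;> linarith

theorem abs_normBracket_add_add_normBracket_sub_le (h : VonNeumannJordanConstLE X (ε + 1))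
    (hε : 0 ≤ ε) (x b c : X) :
    |normBracket x (b + c) + normBracket x (b - c) - 2 * normBracket x b| ≤
      4 * ε * (ε + 1) * (‖x‖ ^ 2 + ‖b‖ ^ 2 + ‖c‖ ^ 2) := by
  have hplus := h.abs_parallelogram_le hε (x + b) c
  have hminus := h.abs_parallelogram_le hε (x - b) c
  have hxb := mul_le_mul_of_nonneg_left (h x b) hε
  have hεc : 0 ≤ ε * ε * ‖c‖ ^ 2 := by positivity
  rw [show x + b + c = x + (b + c) by abel, show x + b - c = x + (b - c) by abel] at hplus
  rw [show x - b + c = x - (b - c) by abel, show x - b - c = x - (b + c) by abel] at hminus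
  simp only [normBracket]
  rw [abs_le] at hplus hminus ⊢
  constructor <;> linarith

theorem abs_normBracket_smul_half_add_le (h : VonNeumannJordanConstLE X (ε + 1)) (hε : 0 ≤ ε)
    (x y : X) (p q : ℝ) :
    |normBracket x (p • y) + normBracket x (q • y) - 2 * normBracket x (((p + q) / 2) • y)| ≤
      4 * ε * (ε + 1) * (‖x‖ ^ 2 + (p ^ 2 + q ^ 2) / 2 * ‖y‖ ^ 2) := by
  have hp : p • y = ((p + q) / 2) • y + ((p - q) / 2) • y := by module
  have hq : q • y = ((p + q) / 2) • y - ((p - q) / 2) • y := by module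
  have hnorm : ‖x‖ ^ 2 + (p ^ 2 + q ^ 2) / 2 * ‖y‖ ^ 2 =
      ‖x‖ ^ 2 + ‖((p + q) / 2) • y‖ ^ 2 + ‖((p - q) / 2) • y‖ ^ 2 := by
    rw [norm_smul_sq, norm_smul_sq]
    ring
  rw [hp, hq, hnorm]
  exact h.abs_normBracket_add_add_normBracket_sub_le hε x _ _

theorem abs_normBracket_smul_le_of_abs_le_one (h : VonNeumannJordanConstLE X (ε + 1))
    (hε : 0 ≤ ε) {x y : X} (hxy : normBracket x y = 0) {t : ℝ} (ht : |t| ≤ 1) :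
    |normBracket x (t • y)| ≤ 4 * ε * (ε + 1) * (‖x‖ ^ 2 + ‖y‖ ^ 2) := by
  have hcont : Continuous fun s : ℝ => normBracket x (s • y) := by
    unfold normBracket
    fun_prop
  refine norm_le_of_norm_add_sub_two_smul_half_add_le (f := fun s : ℝ => normBracket x (s • y))
    hcont.continuousOn (by simp [normBracket_neg_right, hxy]) (by simp [hxy]) ?_ (abs_le.1 ht)
  intro p hp q hq
  have hsq : (p ^ 2 + q ^ 2) / 2 ≤ 1 := by
    have hp_sq : p ^ 2 ≤ 1 := (sq_le_one_iff_abs_le_one p).2 (abs_le.2 hp)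
    have hq_sq : q ^ 2 ≤ 1 := (sq_le_one_iff_abs_le_one q).2 (abs_le.2 hq)
    linarith
  calc |normBracket x (p • y) + normBracket x (q • y) - 2 * normBracket x (((p + q) / 2) • y)|
      ≤ 4 * ε * (ε + 1) * (‖x‖ ^ 2 + (p ^ 2 + q ^ 2) / 2 * ‖y‖ ^ 2) :=
        h.abs_normBracket_smul_half_add_le hε x y p q
    _ ≤ 4 * ε * (ε + 1) * (‖x‖ ^ 2 + ‖y‖ ^ 2) := by
        gcongr
        exact mul_le_of_le_one_left (sq_nonneg _) hsq

theorem abs_normBracket_smul_le (h : VonNeumannJordanConstLE X (ε + 1)) (hε : 0 ≤ ε) {x y : X}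
    (hxy : normBracket x y = 0) (t : ℝ) :
    |normBracket x (t • y)| ≤ 4 * ε * (ε + 1) * (‖x‖ ^ 2 + ‖y‖ ^ 2) * max 1 (t ^ 2) := by
  have hconst : 0 ≤ 4 * ε * (ε + 1) * (‖x‖ ^ 2 + ‖y‖ ^ 2) := by positivity
  rcases le_or_gt |t| 1 with ht | ht
  · exact (h.abs_normBracket_smul_le_of_abs_le_one hε hxy ht).trans
      (le_mul_of_one_le_right hconst (le_max_left _ _))
  · have ht0 : t ≠ 0 := abs_pos.1 (one_pos.trans ht)
    have hinv : |t⁻¹| ≤ 1 := by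
      rw [abs_inv]
      exact inv_le_one_of_one_le₀ ht.le
    have hyx : normBracket y x = 0 := by rwa [normBracket_comm]
    have hscale : normBracket x (t • y) = t ^ 2 * normBracket y (t⁻¹ • x) := by
      rw [← normBracket_smul_smul, smul_inv_smul₀ ht0, normBracket_comm]
    calc |normBracket x (t • y)| = t ^ 2 * |normBracket y (t⁻¹ • x)| := by
          rw [hscale, abs_mul, abs_sq]
      _ ≤ t ^ 2 * (4 * ε * (ε + 1) * (‖y‖ ^ 2 + ‖x‖ ^ 2)) := by
          gcongr
          exact h.abs_normBracket_smul_le_of_abs_le_one hε hyx hinv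
      _ = 4 * ε * (ε + 1) * (‖x‖ ^ 2 + ‖y‖ ^ 2) * t ^ 2 := by ring
      _ ≤ 4 * ε * (ε + 1) * (‖x‖ ^ 2 + ‖y‖ ^ 2) * max 1 (t ^ 2) := by
          gcongr
          exact le_max_right _ _

end VonNeumannJordanConstLE

section NearEuclidean

variable {X : Type*} [SeminormedAddCommGroup X] [NormedSpace ℝ X] {ε : ℝ}

theorem norm_sq_near_euclidean_general (hε : 0 ≤ ε) (h : VonNeumannJordanConstLE X (ε + 1))
    {x y : X} (hxy : normBracket x y = 0) (t : ℝ) :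
    |‖x + t • y‖ ^ 2 - (‖x‖ ^ 2 + t ^ 2 * ‖y‖ ^ 2)| ≤
      ε * (‖x‖ ^ 2 + t ^ 2 * ‖y‖ ^ 2) +
        2 * ε * (ε + 1) * (‖x‖ ^ 2 + ‖y‖ ^ 2) * max 1 (t ^ 2) := by
  have hsum := h.abs_parallelogram_le hε x (t • y)
  have hdiff := h.abs_normBracket_smul_le hε hxy t
  rw [norm_smul_sq] at hsum
  rw [normBracket] at hdiff
  rw [abs_le] at hsum hdiff ⊢
  constructor <;> linarith

theorem abs_norm_add_smul_sq_div_sub_one_le (hε : 0 ≤ ε) (h : VonNeumannJordanConstLE X (ε + 1))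
    {x y : X} (hx : ‖x‖ = 1) (hy : ‖y‖ = 1) (hxy : normBracket x y = 0) (t : ℝ) :
    |‖x + t • y‖ ^ 2 / (1 + t ^ 2) - 1| ≤ 5 * ε + 4 * ε ^ 2 := by
  have hpos : 0 < 1 + t ^ 2 := by positivity
  have hmax : max 1 (t ^ 2) ≤ 1 + t ^ 2 := max_le_add_of_nonneg zero_le_one (sq_nonneg t)
  have hgen := norm_sq_near_euclidean_general hε h hxy t
  rw [hx, hy, one_pow, mul_one] at hgen
  rw [div_sub_one hpos.ne', abs_div, abs_of_pos hpos, div_le_iff₀ hpos]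
  calc |‖x + t • y‖ ^ 2 - (1 + t ^ 2)|
      ≤ ε * (1 + t ^ 2) + 2 * ε * (ε + 1) * (1 + 1) * max 1 (t ^ 2) := hgen
    _ ≤ ε * (1 + t ^ 2) + 2 * ε * (ε + 1) * (1 + 1) * (1 + t ^ 2) := by gcongr
    _ = (5 * ε + 4 * ε ^ 2) * (1 + t ^ 2) := by ring

end NearEuclidean

/-- In a real normed vector space with von Neumann–Jordan constant at most `ε + 1`,
if `x, y` are unit vectors with bracket `[x, y] = ‖x+y‖² − ‖x−y‖² = 0`, then for every
`t ∈ ℝ`, `|‖x + t·y‖²/(1 + t²) − 1| ≤ 15ε + 13.5ε²`. -/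
theorem norm_sq_near_euclidean {X : Type*} [NormedAddCommGroup X] [NormedSpace ℝ X]
    (ε : ℝ) (hε : 0 ≤ ε)
    (hJ : ∀ a b : X, ¬(a = 0 ∧ b = 0) →
      1 / (ε + 1) ≤ (‖a + b‖ ^ 2 + ‖a - b‖ ^ 2) / (2 * (‖a‖ ^ 2 + ‖b‖ ^ 2)) ∧
      (‖a + b‖ ^ 2 + ‖a - b‖ ^ 2) / (2 * (‖a‖ ^ 2 + ‖b‖ ^ 2)) ≤ ε + 1)
    (x y : X) (hx : ‖x‖ = 1) (hy : ‖y‖ = 1)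
    (hxy : ‖x + y‖ ^ 2 - ‖x - y‖ ^ 2 = 0) :
    ∀ t : ℝ, |‖x + t • y‖ ^ 2 / (1 + t ^ 2) - 1| ≤ 15 * ε + 13.5 * ε ^ 2 := by
  have hX : VonNeumannJordanConstLE X (ε + 1) := .of_div_le fun a b hab => (hJ a b hab).2
  exact fun t => (abs_norm_add_smul_sq_div_sub_one_le hε hX hx hy hxy t).trans
    (by linarith [sq_nonneg ε])
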